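/- Let d ≥ 1 and let n ≥ 0 be an even integer. There is a constant C_n (depending only on n and d) such that for every σ ∈ ℕ₊, every a ∈ C^∞(𝕋^d), and every f ∈ C^∞(𝕋^d) with zero mean (⨍f = 0), one has | ∫_{𝕋^d} a(x) f(σx) dx | ≤ C_n σ^{−n} ‖a‖_{C^n} ‖f‖_{L^2(𝕋^d)}. -/

import Mathlib

open MeasureTheory ENNReal

noncomputable section

/-- Points of `ℝ^d` (representing the torus `𝕋^d = ℝ^d/ℤ^d` via periodic functions). -/
abbrev Vec (d : ℕ) := Fin d → ℝ

/-- One fundamental domain `[0,1]^d` of the torus. -/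
def fundCube (d : ℕ) : Set (Vec d) := Set.Icc 0 1

/-- `ℤ^d`-periodicity of a function on `ℝ^d`. -/
def ZPer {d : ℕ} {α : Type*} (f : Vec d → α) : Prop :=
  ∀ (x : Vec d) (k : Fin d → ℤ), f (x + fun i => (k i : ℝ)) = f x

/-- Generic `L^p` "norm" (`p ∈ [1,∞]` as `ℝ≥0∞`) of an `ℝ≥0∞`-valued function. -/
def eLpGen {α : Type*} [MeasurableSpace α] (μ : Measure α) (p : ℝ≥0∞)
    (g : α → ℝ≥0∞) : ℝ≥0∞ :=
  if p = ∞ then essSup g μ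
  else (∫⁻ a, g a ^ p.toReal ∂μ) ^ (1 / p.toReal)

/-- Spatial `L^p` norm over one fundamental domain of the torus. -/
def spLp {d : ℕ} {E : Type*} [NormedAddCommGroup E] (p : ℝ≥0∞)
    (f : Vec d → E) : ℝ≥0∞ :=
  eLpGen (volume.restrict (fundCube d)) p (fun x => (‖f x‖₊ : ℝ≥0∞))

/-- `W^{1,q}` norm of a vector field on the torus: `‖u‖_{L^q} + ‖∇u‖_{L^q}`. -/
def W1qNorm {d : ℕ} (q : ℝ≥0∞) (u : Vec d → Vec d) : ℝ≥0∞ :=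
  spLp q u + spLp q (fderiv ℝ u)

/-- `L^s(0,T;L^p(𝕋^d))` norm. -/
def LsLpT {d : ℕ} {E : Type*} [NormedAddCommGroup E] (T : ℝ) (s p : ℝ≥0∞)
    (f : ℝ → Vec d → E) : ℝ≥0∞ :=
  eLpGen (volume.restrict (Set.Ioo 0 T)) s (fun t => spLp p (f t))

/-- `L^s(0,T;W^{1,q}(𝕋^d))` norm. -/
def LsW1qT {d : ℕ} (T : ℝ) (s q : ℝ≥0∞) (u : ℝ → Vec d → Vec d) : ℝ≥0∞ :=
  eLpGen (volume.restrict (Set.Ioo 0 T)) s (fun t => W1qNorm q (u t))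

/-- Gradient of a scalar function on `ℝ^d`. -/
def gradV {d : ℕ} (f : Vec d → ℝ) (x : Vec d) : Vec d :=
  fun i => fderiv ℝ f x (Pi.single i 1)

/-- Divergence of a vector field on `ℝ^d`. -/
def divV {d : ℕ} (v : Vec d → Vec d) (x : Vec d) : ℝ :=
  ∑ i, fderiv ℝ (fun y => v y i) x (Pi.single i 1)

/-- Laplacian of a scalar function on `ℝ^d`. -/
def laplV {d : ℕ} (f : Vec d → ℝ) : Vec d → ℝ := divV (gradV f)

/-- Euclidean dot product on `ℝ^d`. -/
def dotV {d : ℕ} (a b : Vec d) : ℝ := ∑ i, a i * b i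

/-- `C^N` norm over one fundamental domain. -/
def CkN {d : ℕ} (N : ℕ) (φ : Vec d → ℝ) : ℝ :=
  ∑ i ∈ Finset.range (N + 1), sSup ((fun x => ‖iteratedFDeriv ℝ i φ x‖) '' fundCube d)

/-- `W^{m,r}` norm over one fundamental domain. -/
def SobN {d : ℕ} {E : Type*} [NormedAddCommGroup E] [NormedSpace ℝ E]
    (m : ℕ) (r : ℝ≥0∞) (f : Vec d → E) : ℝ≥0∞ :=
  ∑ i ∈ Finset.range (m + 1), spLp r (iteratedFDeriv ℝ i f)

/-- Test functions for the weak formulation on `[0,T) × 𝕋^d`: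
smooth, `ℤ^d`-periodic in space, vanishing for `t` near `T` (compact support in `[0,T)`). -/
def IsTest (d : ℕ) (T : ℝ) (φ : ℝ → Vec d → ℝ) : Prop :=
  ContDiff ℝ (⊤ : ℕ∞) (Function.uncurry φ) ∧ (∀ t, ZPer (φ t)) ∧
    ∃ T', T' < T ∧ ∀ t, T' ≤ t → ∀ x, φ t x = 0

/-- `ρ` is a weak solution on `(0,T) × 𝕋^d` of `∂_t ρ + u·∇ρ = 0` with initial data `ρ₀`. -/
def IsWeakSolution (d : ℕ) (T : ℝ) (u : ℝ → Vec d → Vec d)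
    (ρ : ℝ → Vec d → ℝ) (ρ₀ : Vec d → ℝ) : Prop :=
  ∀ φ : ℝ → Vec d → ℝ, IsTest d T φ →
    ∫ x in fundCube d, ρ₀ x * φ 0 x =
      ∫ t in Set.Ioo 0 T, ∫ x in fundCube d,
        ρ t x * (deriv (fun τ => φ τ x) t + fderiv ℝ (φ t) x (u t x))

/-- `u` is divergence free in the sense of distributions on `(0,T) × 𝕋^d`. -/
def WeaklyDivFree (d : ℕ) (T : ℝ) (u : ℝ → Vec d → Vec d) : Prop :=
  ∀ φ : ℝ → Vec d → ℝ, ContDiff ℝ (⊤ : ℕ∞) (Function.uncurry φ) →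
    (∀ t, ZPer (φ t)) →
    ∫ t in Set.Ioo 0 T, ∫ x in fundCube d, fderiv ℝ (φ t) x (u t x) = 0

end

/-!
Let `L a` be the mean of `a` over the preimages of a point under the torus map `x ↦ σ x`. Since
that map preserves Lebesgue measure, `∫ a(x) f(σx) dx = ∫ (L a) f`, and since `f` has zero mean,
`L a` may be replaced by `L a - L a 0`. The inverse branches of `x ↦ σ x` contract by `σ⁻¹`, so
`‖Dⁿ(L a)‖ ≤ σ⁻ⁿ ‖Dⁿ a‖`. Finally, a periodic function returns to its initial value along each
lattice vector, so its first derivative is bounded by its second one, and hence by its `n`-th one;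
therefore its oscillation is bounded by its `n`-th derivative too.
-/

open Set

section Deriv

variable {ι V E : Type*} [NormedAddCommGroup V] [NormedSpace ℝ V]
  [NormedAddCommGroup E] [NormedSpace ℝ E]

lemma norm_fderiv_apply_le_of_add_eq {g : V → E} {x v : V} {K : ℝ} (hg : Differentiable ℝ g)
    (hg' : Differentiable ℝ (fderiv ℝ g)) (hK : ∀ y, ‖fderiv ℝ (fderiv ℝ g) y‖ ≤ K)
    (hv : g (x + v) = g x) : ‖fderiv ℝ g x v‖ ≤ K * ‖v‖ ^ 2 := by
  have hlip : ∀ y ∈ Metric.closedBall x ‖v‖, ‖fderiv ℝ g y - fderiv ℝ g x‖ ≤ K * ‖v‖ := by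
    intro y hy
    have hK0 : 0 ≤ K := (norm_nonneg (fderiv ℝ (fderiv ℝ g) x)).trans (hK x)
    calc ‖fderiv ℝ g y - fderiv ℝ g x‖
        ≤ K * ‖y - x‖ := convex_univ.norm_image_sub_le_of_norm_fderiv_le
          (fun z _ ↦ hg' z) (fun z _ ↦ hK z) (mem_univ x) (mem_univ y)
      _ ≤ K * ‖v‖ := by gcongr; exact mem_closedBall_iff_norm.1 hy
  have hTaylor : ‖g (x + v) - g x - fderiv ℝ g x (x + v - x)‖ ≤ K * ‖v‖ * ‖x + v - x‖ :=
    (convex_closedBall x ‖v‖).norm_image_sub_le_of_norm_fderiv_le' (fun z _ ↦ hg z) hlip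
      (Metric.mem_closedBall_self (norm_nonneg v)) (by simp)
  rwa [hv, sub_self, zero_sub, norm_neg, add_sub_cancel_left, mul_assoc, ← sq] at hTaylor

lemma opNorm_le_of_forall_sign [Fintype ι] {L : (ι → ℝ) →L[ℝ] E} {K : ℝ}
    (hL : ∀ w : ι → ℝ, (∀ i, w i ∈ ({-1, 1} : Set ℝ)) → ‖L w‖ ≤ K) : ‖L‖ ≤ K := by
  -- The closed unit ball of the sup norm is the convex hull of the sign vectors.
  have hball : Metric.closedBall (0 : ι → ℝ) 1 ⊆ L ⁻¹' Metric.closedBall 0 K := by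
    rw [closedBall_pi 0 zero_le_one]
    simp only [Pi.zero_apply, Real.closedBall_eq_Icc, zero_sub, zero_add]
    rw [← segment_eq_Icc (by norm_num), ← convexHull_pair, ← convexHull_pi]
    refine convexHull_min (fun w hw ↦ ?_) ((convex_closedBall 0 K).linear_preimage L.toLinearMap)
    simpa using hL w fun i ↦ hw i (mem_univ i)
  have hK : 0 ≤ K := (norm_nonneg _).trans (hL 1 (by simp))
  refine ContinuousLinearMap.opNorm_le_of_unit_norm hK fun x hx ↦ ?_
  simpa using hball (mem_closedBall_zero_iff.2 hx.le)

end Deriv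

namespace ZPer

variable {d : ℕ} {α E : Type*} [NormedAddCommGroup E] [NormedSpace ℝ E]

lemma comp_fract {f : Vec d → α} (hf : ZPer f) (x : Vec d) :
    f (fun i ↦ Int.fract (x i)) = f x := by
  rw [← hf (fun i ↦ Int.fract (x i)) fun i ↦ ⌊x i⌋]
  exact congrArg f (funext fun i ↦ Int.fract_add_floor (x i))

protected lemma smul {a : Vec d → ℝ} {f : Vec d → E} (ha : ZPer a) (hf : ZPer f) :
    ZPer fun x ↦ a x • f x :=
  fun x k ↦ congrArg₂ (· • ·) (ha x k) (hf x k)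

lemma comp_natCast_smul {f : Vec d → α} (hf : ZPer f) (σ : ℕ) :
    ZPer fun x ↦ f ((σ : ℝ) • x) := by
  intro x k
  beta_reduce
  rw [← hf ((σ : ℝ) • x) fun i ↦ σ * k i]
  congr 1
  ext i
  simp [mul_add]

protected lemma iteratedFDeriv {g : Vec d → E} (hg : ZPer g) (n : ℕ) :
    ZPer (iteratedFDeriv ℝ n g) := by
  intro x k
  rw [← iteratedFDeriv_comp_add_right]
  exact congrArg (iteratedFDeriv ℝ n · x) (funext fun y ↦ hg y k)

protected lemma fderiv {g : Vec d → E} (hg : ZPer g) : ZPer (fderiv ℝ g) := by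
  intro x k
  rw [← fderiv_comp_add_right]
  exact congrArg (fderiv ℝ · x) (funext fun y ↦ hg y k)

lemma norm_iteratedFDeriv_le_CkN {a : Vec d → ℝ} {n : ℕ} (ha : ContDiff ℝ n a) (hper : ZPer a)
    (x : Vec d) : ‖iteratedFDeriv ℝ n a x‖ ≤ CkN n a := by
  let S (i : ℕ) : ℝ := sSup ((fun x ↦ ‖iteratedFDeriv ℝ i a x‖) '' fundCube d)
  have hS (i : ℕ) : 0 ≤ S i := Real.sSup_nonneg (by rintro _ ⟨y, _, rfl⟩; exact norm_nonneg _)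
  have hbdd : BddAbove ((fun x ↦ ‖iteratedFDeriv ℝ n a x‖) '' fundCube d) :=
    (isCompact_Icc.image (ha.continuous_iteratedFDeriv le_rfl).norm).bddAbove
  calc ‖iteratedFDeriv ℝ n a x‖
      = ‖iteratedFDeriv ℝ n a fun i ↦ Int.fract (x i)‖ := by
        rw [(hper.iteratedFDeriv n).comp_fract]
    _ ≤ S n := le_csSup hbdd
        ⟨_, ⟨fun _ ↦ Int.fract_nonneg _, fun _ ↦ (Int.fract_lt_one _).le⟩, rfl⟩
    _ ≤ CkN n a := Finset.single_le_sum (fun i _ ↦ hS i) (Finset.self_mem_range_succ n)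

lemma norm_fderiv_le {g : Vec d → E} {K : ℝ} (hper : ZPer g) (hg : Differentiable ℝ g)
    (hg' : Differentiable ℝ (fderiv ℝ g))
    (hK : ∀ x, ‖fderiv ℝ (fderiv ℝ g) x‖ ≤ K) (x : Vec d) :
    ‖fderiv ℝ g x‖ ≤ K := by
  have hK0 : 0 ≤ K := (norm_nonneg (fderiv ℝ (fderiv ℝ g) x)).trans (hK x)
  refine opNorm_le_of_forall_sign fun w hw ↦ ?_
  have hw_int : ∀ i, ∃ k : ℤ, (k : ℝ) = w i := fun i ↦
    (hw i).elim (fun h ↦ ⟨-1, by simp [h]⟩) fun h ↦ ⟨1, by simp [mem_singleton_iff.1 h]⟩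
  choose k hk using hw_int
  have hw_norm : ‖w‖ ≤ 1 := (pi_norm_le_iff_of_nonneg zero_le_one).2 fun i ↦
    (hw i).elim (fun h ↦ by simp [h]) fun h ↦ by simp [mem_singleton_iff.1 h]
  have hgw : g (x + w) = g x := funext hk ▸ hper x k
  calc ‖fderiv ℝ g x w‖ ≤ K * ‖w‖ ^ 2 := norm_fderiv_apply_le_of_add_eq hg hg' hK hgw
    _ ≤ K := mul_le_of_le_one_right hK0 (pow_le_one₀ (norm_nonneg w) hw_norm)

lemma norm_fderiv_le_of_norm_iteratedFDeriv_le {g : Vec d → E} {m : ℕ} {K : ℝ} (hper : ZPer g)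
    (hg : ContDiff ℝ (m + 1) g) (hK : ∀ x, ‖iteratedFDeriv ℝ (m + 1) g x‖ ≤ K)
    (x : Vec d) : ‖fderiv ℝ g x‖ ≤ K := by
  induction m generalizing E x with
  | zero => simpa [← norm_iteratedFDeriv_one] using hK x
  | succ m ih =>
    have hg' : ContDiff ℝ (m + 1) (fderiv ℝ g) := hg.fderiv_right (by simp)
    refine hper.norm_fderiv_le (hg.differentiable (by simp)) (hg'.differentiable (by simp))
      (ih hper.fderiv hg' fun y ↦ ?_) x
    rw [norm_iteratedFDeriv_fderiv]
    exact hK y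

protected lemma norm_sub_le {g : Vec d → E} {K : ℝ} (hper : ZPer g) (hg : Differentiable ℝ g)
    (hK : ∀ x, ‖fderiv ℝ g x‖ ≤ K) (x y : Vec d) : ‖g x - g y‖ ≤ K := by
  have hK0 : 0 ≤ K := (norm_nonneg _).trans (hK x)
  let v : Vec d := fun i ↦ Int.fract ((x - y) i)
  have hv : ‖v‖ ≤ 1 := (pi_norm_le_iff_of_nonneg zero_le_one).2 fun i ↦ by
    rw [Real.norm_of_nonneg (Int.fract_nonneg _)]
    exact (Int.fract_lt_one _).le
  have hgv : g (y + v) = g x := by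
    rw [← hper (y + v) fun i ↦ ⌊(x - y) i⌋]
    congr 1
    ext i
    simp [v, add_assoc]
  calc ‖g x - g y‖ = ‖g (y + v) - g y‖ := by rw [hgv]
    _ ≤ K * ‖y + v - y‖ := convex_univ.norm_image_sub_le_of_norm_fderiv_le
        (fun z _ ↦ hg z) (fun z _ ↦ hK z) (mem_univ y) (mem_univ _)
    _ ≤ K := by
        rw [add_sub_cancel_left]
        exact mul_le_of_le_one_right hK0 hv

lemma norm_sub_le_of_norm_iteratedFDeriv_le {g : Vec d → E} {n : ℕ} {K : ℝ} (hper : ZPer g)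
    (hg : ContDiff ℝ n g) (hK : ∀ x, ‖iteratedFDeriv ℝ n g x‖ ≤ K) (x y : Vec d) :
    ‖g x - g y‖ ≤ 2 * K := by
  cases n with
  | zero =>
    simp only [norm_iteratedFDeriv_zero] at hK
    linarith [norm_sub_le (g x) (g y), hK x, hK y]
  | succ m =>
    have hK0 : 0 ≤ K := (norm_nonneg _).trans (hK x)
    rw [Nat.cast_succ] at hg
    linarith [hper.norm_sub_le (hg.differentiable (by simp))
      (hper.norm_fderiv_le_of_norm_iteratedFDeriv_le hg hK) x y]

end ZPer

section Measure

lemma measurePreserving_fract_mul_add {m : ℤ} (hm : m ≠ 0) (c : ℝ) :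
    MeasurePreserving (fun x : ℝ ↦ Int.fract (m * x + c))
      (volume.restrict (Icc 0 1)) (volume.restrict (Icc 0 1)) := by
  have hmk : MeasurePreserving ((↑) : ℝ → UnitAddCircle) (volume.restrict (Icc 0 1)) := by
    rw [← restrict_Ioc_eq_restrict_Icc]
    simpa using UnitAddCircle.measurePreserving_mk 0
  let rep (y : UnitAddCircle) : ℝ := AddCircle.measurableEquivIco 1 0 y
  have hrep_coe (x : ℝ) : rep x = Int.fract x := by
    have h := AddCircle.coe_equivIco_mk_apply (1 : ℝ) x
    rwa [div_one, mul_one] at h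
  have hrep_meas : Measurable rep :=
    measurable_subtype_coe.comp (AddCircle.measurableEquivIco 1 0).measurable
  have hrep : MeasurePreserving rep volume (volume.restrict (Icc 0 1)) := by
    refine ⟨hrep_meas, ?_⟩
    rw [← hmk.map_eq, Measure.map_map hrep_meas hmk.measurable, ← restrict_Ico_eq_restrict_Icc]
    refine (Measure.map_congr ?_).trans Measure.map_id
    filter_upwards [ae_restrict_mem measurableSet_Ico] with x hx
    simpa [hrep_coe] using Int.fract_eq_self.2 hx
  have hmul : MeasurePreserving (fun y : UnitAddCircle ↦ m • y + c) :=
    (measurePreserving_add_right volume (c : UnitAddCircle)).comp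
      (Measure.measurePreserving_zsmul volume hm)
  convert! hrep.comp (hmul.comp hmk) using 2 with x
  simp [← hrep_coe]

variable {d : ℕ}

lemma restrict_fundCube_eq_pi :
    volume.restrict (fundCube d) = Measure.pi fun _ ↦ volume.restrict (Icc (0 : ℝ) 1) := by
  rw [← Measure.restrict_pi_pi, pi_univ_Icc]
  rfl

instance isProbabilityMeasure_restrict_fundCube :
    IsProbabilityMeasure (volume.restrict (fundCube d)) := by
  have : IsProbabilityMeasure (volume.restrict (Icc (0 : ℝ) 1)) := ⟨by simp⟩
  rw [restrict_fundCube_eq_pi]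
  infer_instance

lemma measurePreserving_fract_smul_add {m : ℤ} (hm : m ≠ 0) (c : Vec d) :
    MeasurePreserving (fun (x : Vec d) i ↦ Int.fract (((m : ℝ) • x + c) i))
      (volume.restrict (fundCube d)) (volume.restrict (fundCube d)) := by
  rw [restrict_fundCube_eq_pi]
  exact measurePreserving_pi _ _ fun i ↦ measurePreserving_fract_mul_add hm (c i)

variable {E : Type*} [NormedAddCommGroup E]

lemma ZPer.integrableOn_comp_smul_add {g : Vec d → E} (hper : ZPer g)
    (hg : IntegrableOn g (fundCube d)) {m : ℤ} (hm : m ≠ 0) (c : Vec d) :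
    IntegrableOn (fun x ↦ g ((m : ℝ) • x + c)) (fundCube d) := by
  simpa only [IntegrableOn, Function.comp_def, hper.comp_fract] using
    (measurePreserving_fract_smul_add hm c).integrable_comp_of_integrable hg

lemma ZPer.integral_comp_smul_add [NormedSpace ℝ E] {g : Vec d → E} (hper : ZPer g)
    (hg : IntegrableOn g (fundCube d)) {m : ℤ} (hm : m ≠ 0) (c : Vec d) :
    ∫ x in fundCube d, g ((m : ℝ) • x + c) = ∫ x in fundCube d, g x := by
  have hT := measurePreserving_fract_smul_add hm c
  have hmap := integral_map hT.aemeasurable (f := g)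
    (hT.map_eq.symm ▸ hg.aestronglyMeasurable)
  simpa only [hT.map_eq, hper.comp_fract] using hmap.symm

lemma spLp_eq_eLpNorm {p : ℝ≥0∞} (hp : p ≠ 0) (f : Vec d → E) :
    spLp p f = eLpNorm f p (volume.restrict (fundCube d)) := by
  rw [spLp, eLpGen]
  split_ifs with hp'
  · rw [hp', eLpNorm_exponent_top]
    rfl
  · rw [eLpNorm_eq_lintegral_rpow_enorm_toReal hp hp']
    rfl

lemma integral_norm_le_toReal_spLp {p : ℝ≥0∞} (hp : 1 ≤ p) {f : Vec d → E}
    (hf : MemLp f p (volume.restrict (fundCube d))) :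
    ∫ x in fundCube d, ‖f x‖ ≤ (spLp p f).toReal := by
  rw [integral_norm_eq_lintegral_enorm hf.1, ← eLpNorm_one_eq_lintegral_enorm,
    spLp_eq_eLpNorm (zero_lt_one.trans_le hp).ne']
  exact toReal_mono hf.2.ne (eLpNorm_le_eLpNorm_of_exponent_le hp hf.1)

lemma memLp_fundCube_of_continuous {f : Vec d → E} (hf : Continuous f) (p : ℝ≥0∞) :
    MemLp f p (volume.restrict (fundCube d)) := by
  obtain ⟨C, hC⟩ := (isCompact_Icc (a := (0 : Vec d)) (b := 1)).exists_bound_of_continuousOn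
    hf.continuousOn
  exact .of_bound hf.aestronglyMeasurable C (ae_restrict_of_forall_mem measurableSet_Icc hC)

end Measure

section TransferOp

variable {d σ : ℕ} [NeZero σ] {E : Type*} [NormedAddCommGroup E] [NormedSpace ℝ E]

/-- The transfer operator of the expanding torus map `x ↦ σ x`: it sends `a` to the function whose
value at `y` is the mean of `a` over the `σ ^ d` preimages `(y + j) / σ` of `y`, with `j` running
over the representatives `{0, …, σ - 1}^d` of `(ℤ / σ)^d`. -/
noncomputable def transferOp (σ : ℕ) [NeZero σ] (a : Vec d → E) (y : Vec d) : E :=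
  ((σ : ℝ) ^ d)⁻¹ • ∑ j : Fin d → ZMod σ, a ((σ : ℝ)⁻¹ • (y + fun i ↦ ((j i).val : ℝ)))

lemma ZPer.apply_inv_smul_add_eq_of_zmod_eq {α : Type*} {a : Vec d → α} (ha : ZPer a)
    {j k : Fin d → ℤ} (hjk : ∀ i, (j i : ZMod σ) = k i) (y : Vec d) :
    a ((σ : ℝ)⁻¹ • (y + fun i ↦ (j i : ℝ))) = a ((σ : ℝ)⁻¹ • (y + fun i ↦ (k i : ℝ))) := by
  have hσ : (σ : ℝ) ≠ 0 := NeZero.ne _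
  have hdvd (i : Fin d) : ∃ l : ℤ, k i - j i = σ * l :=
    (ZMod.intCast_eq_intCast_iff_dvd_sub _ _ _).1 (hjk i)
  choose l hl using hdvd
  rw [← ha _ l]
  congr 1
  ext i
  have hli : (k i : ℝ) - j i = σ * l i := mod_cast hl i
  simp only [Pi.add_apply, Pi.smul_apply, smul_eq_mul]
  field_simp
  linarith

protected lemma ZPer.transferOp {a : Vec d → E} (ha : ZPer a) : ZPer (transferOp σ a) := by
  intro y k
  unfold transferOp
  congr 1
  refine Fintype.sum_equiv (Equiv.addRight fun i ↦ (k i : ZMod σ)) _ _ fun j ↦ ?_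
  convert! ha.apply_inv_smul_add_eq_of_zmod_eq (σ := σ) (j := fun i ↦ (j i).val + k i)
    (k := fun i ↦ ((j i + k i).val : ℤ)) (fun i ↦ by simp) y using 2
  ext i
  simp [add_left_comm, add_comm]

lemma contDiff_transferOp {a : Vec d → E} {n : ℕ} (ha : ContDiff ℝ n a) :
    ContDiff ℝ n (transferOp σ a) := by
  unfold transferOp
  fun_prop

lemma norm_iteratedFDeriv_transferOp_le {a : Vec d → E} {n : ℕ} {K : ℝ} (ha : ContDiff ℝ n a)
    (hK : ∀ x, ‖iteratedFDeriv ℝ n a x‖ ≤ K) (y : Vec d) :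
    ‖iteratedFDeriv ℝ n (transferOp σ a) y‖ ≤ ((σ : ℝ) ^ n)⁻¹ * K := by
  have hσ : (0 : ℝ) < σ := Nat.cast_pos.2 (NeZero.pos σ)
  let branch (j : Fin d → ZMod σ) (y : Vec d) : E :=
    a ((σ : ℝ)⁻¹ • (y + fun i ↦ ((j i).val : ℝ)))
  have hbranch (j) : ContDiff ℝ n (branch j) := by fun_prop
  have hbranch_le (j) : ‖iteratedFDeriv ℝ n (branch j) y‖ ≤ ((σ : ℝ) ^ n)⁻¹ * K := by
    rw [iteratedFDeriv_comp_add_right (f := fun z ↦ a ((σ : ℝ)⁻¹ • z)),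
      iteratedFDeriv_comp_const_smul _ ha, norm_smul, norm_pow, norm_inv,
      Real.norm_of_nonneg hσ.le, inv_pow]
    gcongr
    exact hK _
  change ‖iteratedFDeriv ℝ n (fun y ↦ ((σ : ℝ) ^ d)⁻¹ • ∑ j, branch j y) y‖ ≤ _
  rw [iteratedFDeriv_const_smul_apply' (ContDiff.sum fun j _ ↦ hbranch j).contDiffAt,
    iteratedFDeriv_fun_sum_apply fun j _ ↦ (hbranch j).contDiffAt, norm_smul, norm_inv,
    Real.norm_of_nonneg (by positivity), inv_mul_le_iff₀ (by positivity)]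
  simpa using norm_sum_le_of_le Finset.univ fun j _ ↦ hbranch_le j

lemma integral_smul_comp_smul_eq_integral_transferOp_smul {a : Vec d → ℝ} {f : Vec d → E}
    (ha : Continuous a) (hap : ZPer a) (hf : IntegrableOn f (fundCube d)) (hfp : ZPer f) :
    ∫ x in fundCube d, a x • f ((σ : ℝ) • x) = ∫ y in fundCube d, transferOp σ a y • f y := by
  have hσ : (σ : ℝ) ≠ 0 := NeZero.ne _
  have hσ' : (σ : ℤ) ≠ 0 := NeZero.ne _
  have hint {b : Vec d → ℝ} (hb : Continuous b) :
      IntegrableOn (fun x ↦ b x • f ((σ : ℝ) • x)) (fundCube d) := by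
    have hfσ := hfp.integrableOn_comp_smul_add hf hσ' 0
    simp only [Int.cast_natCast, add_zero] at hfσ
    exact hfσ.continuousOn_smul hb.continuousOn isCompact_Icc
  have hbranch (j : Fin d → ZMod σ) :
      ∫ x in fundCube d, a ((σ : ℝ)⁻¹ • ((σ : ℝ) • x + fun i ↦ ((j i).val : ℝ))) •
        f ((σ : ℝ) • x) = ∫ x in fundCube d, a x • f ((σ : ℝ) • x) := by
    rw [← (hap.smul (hfp.comp_natCast_smul σ)).integral_comp_smul_add (hint ha) one_ne_zero
      ((σ : ℝ)⁻¹ • fun i ↦ ((j i).val : ℝ))]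
    refine integral_congr_ae (.of_forall fun x ↦ ?_)
    have hfj := hfp ((σ : ℝ) • x) fun i ↦ (j i).val
    simp only [Int.cast_natCast] at hfj
    simp only [Int.cast_one, one_smul, smul_add, inv_smul_smul₀ hσ, smul_inv_smul₀ hσ, hfj]
  have hcont : Continuous (transferOp σ a) :=
    (contDiff_transferOp (n := 0) (contDiff_zero.2 ha)).continuous
  calc ∫ x in fundCube d, a x • f ((σ : ℝ) • x)
      = ((σ : ℝ) ^ d)⁻¹ • ∑ j : Fin d → ZMod σ, ∫ x in fundCube d,
          a ((σ : ℝ)⁻¹ • ((σ : ℝ) • x + fun i ↦ ((j i).val : ℝ))) • f ((σ : ℝ) • x) := by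
        simp only [hbranch, Finset.sum_const, Finset.card_univ, Fintype.card_fun, ZMod.card,
          Fintype.card_fin, ← Nat.cast_smul_eq_nsmul ℝ, Nat.cast_pow,
          inv_smul_smul₀ (pow_ne_zero d hσ)]
    _ = ∫ x in fundCube d, transferOp σ a ((σ : ℝ) • x) • f ((σ : ℝ) • x) := by
        rw [← integral_finsetSum _ fun j _ ↦ hint (by fun_prop), ← integral_smul]
        simp only [transferOp, Finset.sum_smul, smul_assoc]
    _ = ∫ y in fundCube d, transferOp σ a y • f y := by
        simpa using (hap.transferOp.smul hfp).integral_comp_smul_add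
          (hf.continuousOn_smul hcont.continuousOn isCompact_Icc) hσ' 0

end TransferOp

theorem oscillatory_mean_bound_general {d n σ : ℕ} (hσ : 0 < σ) {p : ℝ≥0∞} (hp : 1 ≤ p)
    {E : Type*} [NormedAddCommGroup E] [NormedSpace ℝ E] [CompleteSpace E]
    {a : Vec d → ℝ} {f : Vec d → E} (ha : ContDiff ℝ n a) (hap : ZPer a)
    (hf : MemLp f p (volume.restrict (fundCube d))) (hfp : ZPer f)
    (hf0 : ∫ x in fundCube d, f x = 0) :
    ‖∫ x in fundCube d, a x • f ((σ : ℝ) • x)‖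
      ≤ 2 * (σ : ℝ) ^ (-(n : ℝ)) * CkN n a * (spLp p f).toReal := by
  have : NeZero σ := ⟨hσ.ne'⟩
  have hfint : IntegrableOn f (fundCube d) := hf.integrable hp
  let b := transferOp σ a
  let K := 2 * (((σ : ℝ) ^ n)⁻¹ * CkN n a)
  have hb : ContDiff ℝ n b := contDiff_transferOp ha
  have hosc (y : Vec d) : ‖b y - b 0‖ ≤ K :=
    hap.transferOp.norm_sub_le_of_norm_iteratedFDeriv_le hb
      (norm_iteratedFDeriv_transferOp_le ha (hap.norm_iteratedFDeriv_le_CkN ha)) y 0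
  have hcenter : ∫ y in fundCube d, b y • f y = ∫ y in fundCube d, (b y - b 0) • f y := by
    simp_rw [sub_smul]
    rw [integral_sub (hfint.continuousOn_smul hb.continuous.continuousOn isCompact_Icc)
      (hfint.fun_smul (b 0)), integral_smul, hf0, smul_zero, sub_zero]
  calc ‖∫ x in fundCube d, a x • f ((σ : ℝ) • x)‖
      = ‖∫ y in fundCube d, (b y - b 0) • f y‖ := by
        rw [integral_smul_comp_smul_eq_integral_transferOp_smul ha.continuous hap hfint hfp,
          hcenter]
    _ ≤ ∫ y in fundCube d, K * ‖f y‖ := by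
        refine norm_integral_le_of_norm_le (hfint.norm.const_mul K) (.of_forall fun y ↦ ?_)
        rw [norm_smul]
        gcongr
        exact hosc y
    _ = K * ∫ y in fundCube d, ‖f y‖ := integral_const_mul _ _
    _ ≤ K * (spLp p f).toReal := by
        gcongr
        · exact (norm_nonneg _).trans (hosc 0)
        · exact integral_norm_le_toReal_spLp hp hf
    _ = 2 * (σ : ℝ) ^ (-(n : ℝ)) * CkN n a * (spLp p f).toReal := by
        rw [Real.rpow_neg (by positivity), Real.rpow_natCast]
        ring

/-- **Fast decay of means against oscillations** (Lemma 2.5): for `d ≥ 1` and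
even `n ≥ 0` there is `C_n` such that for all `σ ∈ ℕ₊`, smooth periodic `a`, and
smooth periodic zero-mean `f`,
`| ∫_{𝕋^d} a(x) f(σx) dx | ≤ C_n σ^{−n} ‖a‖_{C^n} ‖f‖_{L²}`. -/
theorem oscillatory_mean_bound (d : ℕ) (hd : 1 ≤ d) (n : ℕ) (hn : Even n) :
    ∃ C : ℝ, 0 < C ∧ ∀ (σ : ℕ), 0 < σ → ∀ (a f : Vec d → ℝ),
      ContDiff ℝ (⊤ : ℕ∞) a → ZPer a →
      ContDiff ℝ (⊤ : ℕ∞) f → ZPer f → (∫ x in fundCube d, f x) = 0 →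
      |∫ x in fundCube d, a x * f ((σ : ℝ) • x)|
        ≤ C * (σ : ℝ) ^ (-(n : ℝ)) * CkN n a * (spLp 2 f).toReal :=
  ⟨2, two_pos, fun _ hσ _ _ ha hap hf hfp hf0 ↦ oscillatory_mean_bound_general hσ one_le_two
    (ha.of_le (mod_cast le_top)) hap (memLp_fundCube_of_continuous hf.continuous 2) hfp hf0⟩
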